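/- Let m ≥ 3 be a prime, n = 2^m − 1, h2 = (2^{m−1} − 1)/m and h1 = (h2 + 1)/2 (both integers). For a ∈ {1, …, n − 1}, the 2-cyclotomic coset of a modulo n is {a·2^i mod n : i ≥ 0}, and its coset leader is its least element; let δ_1 < δ_2 < ⋯ be the distinct coset leaders of the nonzero 2-cyclotomic cosets modulo n, listed in increasing order. Let β be a primitive element of F_{2^m}, let g1(x) = lcm(m_β(x), …, m_{β^{δ_{h1} − 1}}(x)) (with g1(x) = 1 when δ_{h1} = 1), the generator polynomial of the BCH code C_{(2,n,δ_{h1},1)}, and let g(x) = lcm(m_β(x), …, m_{β^{δ_{h2} + 1}}(x)), the generator polynomial of the BCH code C_{(2,n,δ_{h2}+2,1)}. Then g1(x) divides g(x), and the cyclic code of length 2n over F_2 with generator polynomial g1(x)·g(x) has dimension n + 2^{m−2} + (m + 1)/2 and minimum distance at least (n − 1)/m. -/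

import Mathlib

open Polynomial

/-- The cyclic code of length `N` over the field `F` generated by the polynomial `g`.
Codewords are identified with the representatives of degree `< N` of the elements of the
ideal generated by `g` in `F[x]/(x^N - 1)`; equivalently, a polynomial `c` of degree `< N`
is a codeword iff `c ∈ (g, x^N - 1)` as an ideal of `F[x]`. -/
noncomputable def cyclicCode (F : Type*) [Field F] (N : ℕ) (g : Polynomial F) :
    Submodule F (Polynomial F) :=
  Polynomial.degreeLT F N ⊓
    Submodule.restrictScalars F (Ideal.span ({g, Polynomial.X ^ N - 1} : Set (Polynomial F)))

/-- The minimum distance (equivalently, the minimum Hamming weight of a nonzero codeword,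
a codeword being identified with its coefficient vector) of a linear code of polynomials. -/
noncomputable def minDist {F : Type*} [Field F] (C : Submodule F (Polynomial F)) : ℕ :=
  sInf {w | ∃ c ∈ C, c ≠ 0 ∧ c.support.card = w}

/-- The set of coset leaders of the nonzero `2`-cyclotomic cosets modulo `n`:
`a ∈ {1, …, n-1}` is a coset leader iff it is the least element of its coset
`{a·2^i mod n : i ≥ 0}`. -/
def cosetLeaders (n : ℕ) : Set ℕ :=
  {a | 0 < a ∧ a < n ∧ ∀ i : ℕ, a ≤ a * 2 ^ i % n}

/-- `δ` is the `h`-th smallest coset leader (i.e. `δ = δ_h` where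
`δ_1 < δ_2 < ⋯` lists the coset leaders in increasing order). -/
def IsNthSmallestLeader (n h δ : ℕ) : Prop :=
  δ ∈ cosetLeaders n ∧ {a ∈ cosetLeaders n | a ≤ δ}.ncard = h

theorem leader_odd {m a : ℕ} (hm : 3 ≤ m) (ha : a ∈ cosetLeaders (2 ^ m - 1)) : a % 2 = 1 := by
  obtain ⟨h0, h1, h2⟩ := ha
  by_contra hodd
  obtain ⟨b, rfl⟩ : ∃ b, a = 2 * b := ⟨a / 2, by omega⟩
  have h3 := h2 (m - 1)
  obtain ⟨k, rfl⟩ : ∃ k, m = k + 1 := ⟨m - 1, by omega⟩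
  have hpos : 1 ≤ 2 ^ (k + 1) := Nat.one_le_two_pow
  have e : 2 * b * 2 ^ (k + 1 - 1) = b + b * (2 ^ (k + 1) - 1) := by
    have : 2 ^ (k + 1) = (2 ^ (k + 1) - 1) + 1 := by omega
    calc 2 * b * 2 ^ (k + 1 - 1) = b * 2 ^ (k + 1) := by
          rw [Nat.add_sub_cancel, pow_succ]; ring
      _ = b * ((2 ^ (k + 1) - 1) + 1) := by rw [← this]
      _ = _ := by ring
  rw [e, Nat.add_mul_mod_self_right, Nat.mod_eq_of_lt (by omega)] at h3
  omega

theorem leaders_finite (n : ℕ) : (cosetLeaders n).Finite :=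
  (Set.finite_Iio n).subset fun _ ha => ha.2.1

theorem nth_ge {m h δ : ℕ} (hm : 3 ≤ m) (hδ : IsNthSmallestLeader (2 ^ m - 1) h δ) :
    2 * h ≤ δ + 1 := by
  have hodd := leader_odd hm hδ.1
  rw [← hδ.2]
  have : {a ∈ cosetLeaders (2 ^ m - 1) | a ≤ δ}.ncard ≤
      (↑(Finset.range ((δ + 1) / 2)) : Set ℕ).ncard := by
    apply Set.ncard_le_ncard_of_injOn (fun a => a / 2)
    · rintro a ⟨ha, hle⟩
      have := leader_odd hm ha
      simp only [Finset.coe_range, Set.mem_Iio]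
      omega
    · rintro a ⟨ha, _⟩ b ⟨hb, _⟩ hab
      have := leader_odd hm ha
      have := leader_odd hm hb
      simp only at hab
      omega
  rw [Set.ncard_coe_finset, Finset.card_range] at this
  omega

theorem exists_leader {m j : ℕ} (h0 : 0 < j) (h1 : j < 2 ^ m - 1) :
    ∃ l ∈ cosetLeaders (2 ^ m - 1), l ≤ j ∧ ∃ i, l = j * 2 ^ i % (2 ^ m - 1) := by
  classical
  set n := 2 ^ m - 1 with hn
  have hex : ∃ l, ∃ i, l = j * 2 ^ i % n := ⟨_, 0, rfl⟩
  obtain ⟨i, hi⟩ := Nat.find_spec hex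
  have hcop : ∀ i, Nat.Coprime n (2 ^ i) := by
    intro i
    apply Nat.Coprime.pow_right
    rw [Nat.coprime_two_right, Nat.odd_iff]
    have : m ≠ 0 := by rintro rfl; simp at hn; omega
    obtain ⟨k, rfl⟩ := Nat.exists_eq_succ_of_ne_zero this
    have : 1 ≤ 2 ^ k := Nat.one_le_two_pow
    rw [hn, Nat.pow_succ]; omega
  refine ⟨Nat.find hex, ⟨?_, ?_, ?_⟩, ?_, i, hi⟩
  · rw [hi]
    apply Nat.pos_of_ne_zero
    intro h
    have := (hcop i).dvd_of_dvd_mul_right (Nat.dvd_of_mod_eq_zero h)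
    exact absurd (Nat.le_of_dvd h0 this) (by omega)
  · rw [hi]; exact Nat.mod_lt _ (by omega)
  · intro k
    apply Nat.find_min' hex
    refine ⟨i + k, ?_⟩
    conv_lhs => rw [hi]
    rw [Nat.mod_mul_mod, pow_add, mul_assoc]
  · apply Nat.find_min' hex
    exact ⟨0, by rw [pow_zero, mul_one, Nat.mod_eq_of_lt h1]⟩

section field
set_option linter.unusedSectionVars false
variable {K : Type*} [Field K] [Fintype K] [Algebra (ZMod 2) K]

theorem minpoly_pow_two_pow (x : K) (i : ℕ) :
    minpoly (ZMod 2) (x ^ 2 ^ i) = minpoly (ZMod 2) x := by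
  have := minpoly.algEquiv_eq ((FiniteField.frobeniusAlgEquivOfAlgebraic (ZMod 2) K) ^ i) x
  rw [AlgEquiv.coe_pow, FiniteField.coe_frobeniusAlgEquivOfAlgebraic_iterate, ZMod.card] at this
  exact this

theorem exists_pow_of_minpoly_eq {x y : K} (h : minpoly (ZMod 2) x = minpoly (ZMod 2) y) :
    ∃ i : ℕ, y = x ^ 2 ^ i := by
  obtain ⟨σ, hσ⟩ := (Normal.minpoly_eq_iff_mem_orbit K).mp h
  obtain ⟨i, hi⟩ := (FiniteField.bijective_frobeniusAlgEquivOfAlgebraic_pow (ZMod 2) K).2 σ⁻¹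
  refine ⟨i, ?_⟩
  have h1 : σ⁻¹ x = y := by rw [← hσ]; simp
  rw [← h1, ← hi, AlgEquiv.coe_pow, FiniteField.coe_frobeniusAlgEquivOfAlgebraic_iterate,
    ZMod.card]

theorem pow_mod_order {β : K} {n : ℕ} (hβ : IsPrimitiveRoot β n) (k : ℕ) :
    β ^ (k % n) = β ^ k := by
  rw [hβ.eq_orderOf, pow_mod_orderOf]

theorem leader_le_of_minpoly_eq {β : K} {n a b : ℕ} (hβ : IsPrimitiveRoot β n)
    (ha : a ∈ cosetLeaders n) (hb : b ∈ cosetLeaders n)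
    (h : minpoly (ZMod 2) (β ^ a) = minpoly (ZMod 2) (β ^ b)) : a ≤ b := by
  obtain ⟨i, hi⟩ := exists_pow_of_minpoly_eq h
  rw [← pow_mul, ← pow_mod_order hβ (a * 2 ^ i)] at hi
  have := hβ.pow_inj hb.2.1 (Nat.mod_lt _ (by have := hb.2.1; omega)) hi
  rw [this]
  exact ha.2.2 i

theorem natDegree_minpoly_leader {β : K} {m a : ℕ} (hmp : m.Prime)
    (hK : Fintype.card K = 2 ^ m) (hβ : IsPrimitiveRoot β (2 ^ m - 1))
    (ha : a ∈ cosetLeaders (2 ^ m - 1)) : (minpoly (ZMod 2) (β ^ a)).natDegree = m := by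
  have hfr : Module.finrank (ZMod 2) K = m := by
    have := Module.card_eq_pow_finrank (K := ZMod 2) (V := K)
    rw [hK, ZMod.card] at this
    exact (Nat.pow_right_injective le_rfl this).symm
  have hint : IsIntegral (ZMod 2) (β ^ a) := IsIntegral.of_finite _ _
  have hd : (minpoly (ZMod 2) (β ^ a)).natDegree ∣ m := by
    rw [← hfr]; exact minpoly.degree_dvd hint
  rcases (Nat.dvd_prime hmp).mp hd with h | h
  · exfalso
    rw [minpoly.natDegree_eq_one_iff] at h
    obtain ⟨c, hc⟩ := h
    obtain ⟨h0, h1, -⟩ := ha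
    fin_cases c
    · have hz : (0 : K) = β ^ a := by rw [← hc]; exact (map_zero _).symm
      have : β = 0 := by
        by_contra hne
        exact pow_ne_zero a hne hz.symm
      exact hβ.ne_zero (by omega) this
    · have hz : (1 : K) = β ^ a := by rw [← hc]; exact (map_one _).symm
      exact hβ.pow_ne_one_of_pos_of_lt h0.ne' h1 hz.symm
  · exact h

/-- degree of the lcm -/
theorem natDegree_lcm {β : K} {m D : ℕ} (hmp : m.Prime)
    (hK : Fintype.card K = 2 ^ m) (hβ : IsPrimitiveRoot β (2 ^ m - 1)) (hD : D < 2 ^ m - 1) :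
    ((Finset.Icc 1 D).lcm fun j => minpoly (ZMod 2) (β ^ j)).natDegree =
      {a ∈ cosetLeaders (2 ^ m - 1) | a ≤ D}.ncard * m := by
  classical
  have hfin : {a ∈ cosetLeaders (2 ^ m - 1) | a ≤ D}.Finite :=
    (leaders_finite _).subset fun _ h => h.1
  set L := hfin.toFinset with hL
  have hmem : ∀ a, a ∈ L ↔ a ∈ cosetLeaders (2 ^ m - 1) ∧ a ≤ D := by
    intro a; simp [hL]
  have hint : ∀ j, IsIntegral (ZMod 2) (β ^ j) := fun j => IsIntegral.of_finite _ _
  have hne : ∀ j, minpoly (ZMod 2) (β ^ j) ≠ 0 := fun j => minpoly.ne_zero (hint j)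
  have hPdeg : (∏ a ∈ L, minpoly (ZMod 2) (β ^ a)).natDegree = L.card * m := by
    rw [Polynomial.natDegree_prod _ _ (fun a _ => hne a),
      Finset.sum_congr rfl (fun a ha => natDegree_minpoly_leader hmp hK hβ ((hmem a).1 ha).1)]
    simp
  rw [Set.ncard_eq_toFinset_card _ hfin, ← hL, ← hPdeg]
  have d1 : ((Finset.Icc 1 D).lcm fun j => minpoly (ZMod 2) (β ^ j)) ∣
      ∏ a ∈ L, minpoly (ZMod 2) (β ^ a) := by
    apply Finset.lcm_dvd
    intro j hj
    rw [Finset.mem_Icc] at hj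
    obtain ⟨l, hl, hlj, i, hi⟩ := exists_leader (m := m) (j := j) (by omega) (by omega)
    have : minpoly (ZMod 2) (β ^ j) = minpoly (ZMod 2) (β ^ l) := by
      rw [hi, pow_mod_order hβ, pow_mul, minpoly_pow_two_pow]
    rw [this]
    exact Finset.dvd_prod_of_mem (fun a => minpoly (ZMod 2) (β ^ a))
      ((hmem l).2 ⟨hl, by omega⟩)
  have d2 : ∏ a ∈ L, minpoly (ZMod 2) (β ^ a) ∣
      ((Finset.Icc 1 D).lcm fun j => minpoly (ZMod 2) (β ^ j)) := by
    apply Finset.prod_dvd_of_coprime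
    · intro a ha b hb hab
      have ha' := ((hmem a).1 (Finset.mem_coe.1 ha)).1
      have hb' := ((hmem b).1 (Finset.mem_coe.1 hb)).1
      rcases (minpoly.irreducible (hint a)).isCoprime_or_dvd (minpoly (ZMod 2) (β ^ b)) with h | h
      · exact h
      · exfalso
        have hs := (minpoly.irreducible (hint a)).associated_of_dvd
          (minpoly.irreducible (hint b)) h
        have he := Polynomial.eq_of_monic_of_associated (minpoly.monic (hint a))
          (minpoly.monic (hint b)) hs
        exact hab (le_antisymm (leader_le_of_minpoly_eq hβ ha' hb' he)
          (leader_le_of_minpoly_eq hβ hb' ha' he.symm))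
    · intro a ha
      have := (hmem a).1 ha
      exact Finset.dvd_lcm (f := fun j => minpoly (ZMod 2) (β ^ j))
        (Finset.mem_Icc.2 ⟨this.1.1, this.2⟩)
  have hPne : ∏ a ∈ L, minpoly (ZMod 2) (β ^ a) ≠ 0 := Finset.prod_ne_zero_iff.2 fun a _ => hne a
  exact le_antisymm (Polynomial.natDegree_le_of_dvd d1 hPne)
    (Polynomial.natDegree_le_of_dvd d2 (fun h => hPne (by rw [h, zero_dvd_iff] at d1; exact d1)))

/-- BCH bound -/
theorem bch_bound {β : K} {n D : ℕ} (hβ : IsPrimitiveRoot β n) {u : Polynomial (ZMod 2)}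
    (hu : u ≠ 0) (hdeg : u.degree < n)
    (h : ((Finset.Icc 1 D).lcm fun j => minpoly (ZMod 2) (β ^ j)) ∣ u) :
    D + 1 ≤ u.support.card := by
  by_contra hlt
  push Not at hlt
  have hroot : ∀ j, 1 ≤ j → j ≤ D → aeval (β ^ j) u = 0 := by
    intro j h1 h2
    rw [← minpoly.dvd_iff]
    exact (Finset.dvd_lcm (f := fun j => minpoly (ZMod 2) (β ^ j))
      (Finset.mem_Icc.2 ⟨h1, h2⟩)).trans h
  let e := u.support.equivFin.symm
  have hn : ∀ k ∈ u.support, k < n := by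
    intro k hk
    have := Polynomial.le_degree_of_mem_supp k hk
    exact_mod_cast this.trans_lt hdeg
  have key := Matrix.eq_zero_of_forall_pow_sum_mul_pow_eq_zero
    (f := fun i => β ^ (e i : ℕ))
    (v := fun i => algebraMap (ZMod 2) K (u.coeff (e i)) * β ^ (e i : ℕ)) ?_ ?_
  · have hcard : 0 < u.support.card := Finset.card_pos.2 (by simpa using hu)
    have h0 := congrFun key ⟨0, hcard⟩
    simp only [Pi.zero_apply, mul_eq_zero] at h0
    rcases h0 with h0 | h0
    · rw [map_eq_zero] at h0
      exact Polynomial.mem_support_iff.1 (e ⟨0, hcard⟩).2 h0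
    · have := hn _ (e ⟨0, hcard⟩).2
      exact hβ.ne_zero (by omega) (eq_zero_of_pow_eq_zero h0)
  · intro i j hij
    have := hβ.pow_inj (hn _ (e i).2) (hn _ (e j).2) hij
    exact e.injective (Subtype.ext this)
  · intro i
    have hr := hroot (i + 1) (by omega) (by have := i.2; omega)
    rw [Polynomial.aeval_eq_sum_range, ] at hr
    have hr2 : ∑ k ∈ u.support, algebraMap (ZMod 2) K (u.coeff k) * (β ^ ((i : ℕ) + 1)) ^ k = 0 := by
      rw [← hroot (i + 1) (by omega) (by have := i.2; omega), Polynomial.aeval_def,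
        Polynomial.eval₂_eq_sum, Polynomial.sum_def]
    rw [← Finset.sum_coe_sort, ← e.sum_comp] at hr2
    rw [← hr2]
    apply Finset.sum_congr rfl
    intro j _
    ring

end field

theorem finrank_multiples {F : Type*} [Field F] {N : ℕ} {G : Polynomial F} (hG : G ≠ 0)
    (hN : G.natDegree ≤ N) (hd : G ∣ X ^ N - 1) :
    Module.finrank F (cyclicCode F N G) = N - G.natDegree := by
  have hspan : Ideal.span ({G, X ^ N - 1} : Set (Polynomial F)) = Ideal.span {G} := by
    rw [Ideal.span_insert, sup_eq_left]
    exact Ideal.span_singleton_le_span_singleton.2 hd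
  have hmap : cyclicCode F N G =
      (degreeLT F (N - G.natDegree)).map (LinearMap.mulLeft F G) := by
    ext c
    simp only [cyclicCode, hspan, Submodule.mem_inf, Submodule.mem_map,
      Submodule.restrictScalars_mem, Ideal.mem_span_singleton, LinearMap.mulLeft_apply,
      mem_degreeLT]
    constructor
    · rintro ⟨h1, q, rfl⟩
      refine ⟨q, ?_, rfl⟩
      by_cases hq : q = 0
      · rw [hq, degree_zero]; exact WithBot.bot_lt_coe _
      · rw [degree_mul, degree_eq_natDegree hG, degree_eq_natDegree hq] at h1
        rw [degree_eq_natDegree hq]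
        norm_cast at h1 ⊢
        omega
    · rintro ⟨q, h1, rfl⟩
      refine ⟨?_, dvd_mul_right _ _⟩
      by_cases hq : q = 0
      · rw [hq, mul_zero, degree_zero]; exact WithBot.bot_lt_coe _
      · rw [degree_mul, degree_eq_natDegree hG, degree_eq_natDegree hq]
        rw [degree_eq_natDegree hq] at h1
        norm_cast at h1 ⊢
        omega
  have hinj : Function.Injective (LinearMap.mulLeft F G) := fun p q h => mul_left_cancel₀ hG h
  rw [hmap, ← (Submodule.equivMapOfInjective _ hinj _).finrank_eq,
    (degreeLTEquiv F _).finrank_eq, Module.finrank_fin_fun]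

theorem support_fold {n : ℕ} {a b : Polynomial (ZMod 2)} (ha : a.degree < n) :
    (a + X ^ n * b).support.card = a.support.card + b.support.card := by
  classical
  have hc : ∀ k, (a + X ^ n * b).coeff k = if n ≤ k then b.coeff (k - n) else a.coeff k := by
    intro k
    rw [coeff_add, coeff_X_pow_mul']
    split_ifs with h
    · rw [coeff_eq_zero_of_degree_lt (ha.trans_le (by exact_mod_cast h)), zero_add]
    · rw [add_zero]
  have hs : (a + X ^ n * b).support = a.support ∪ b.support.map (addRightEmbedding n) := by
    ext k
    simp only [mem_support_iff, hc, Finset.mem_union, Finset.mem_map, addRightEmbedding_apply]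
    split_ifs with h
    · rw [coeff_eq_zero_of_degree_lt (ha.trans_le (by exact_mod_cast h))]
      constructor
      · intro h'
        exact Or.inr ⟨k - n, h', by omega⟩
      · rintro (h' | ⟨l, hl, rfl⟩)
        · exact absurd rfl h'
        · simpa using hl
    · constructor
      · exact Or.inl
      · rintro (h' | ⟨l, hl, rfl⟩)
        · exact h'
        · omega
  rw [hs, Finset.card_union_of_disjoint, Finset.card_map]
  rw [Finset.disjoint_left]
  intro k hk hk'
  rw [Finset.mem_map] at hk'
  obtain ⟨l, -, rfl⟩ := hk'
  rw [mem_support_iff] at hk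
  apply hk
  apply coeff_eq_zero_of_degree_lt (ha.trans_le _)
  simp only [addRightEmbedding_apply]
  exact_mod_cast Nat.le_add_left n l

/-- for a prime `m ≥ 3`, `n = 2^m - 1`, `h2 = (2^{m-1} - 1)/m`,
`h1 = (h2 + 1)/2`, `δ_{h1}` and `δ_{h2}` the `h1`-th and `h2`-th smallest nonzero
`2`-cyclotomic coset leaders mod `n`, `g1 = lcm(m_β, …, m_{β^{δ_{h1} - 1}})` the
generator polynomial of the BCH code `C_{(2,n,δ_{h1},1)}` (so `g1 = 1` when
`δ_{h1} = 1`), and `g = lcm(m_β, …, m_{β^{δ_{h2} + 1}})` the generator polynomial of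
the BCH code `C_{(2,n,δ_{h2}+2,1)}` (with `β` a primitive element of `F_{2^m}`):
`g1` divides `g`, and the repeated-root binary cyclic code of length `2n` with
generator polynomial `g1(x) g(x)` has dimension `n + 2^{m-2} + (m+1)/2` and minimum
distance at least `(n-1)/m`. -/
theorem statement19 {K : Type*} [Field K] [Fintype K] [Algebra (ZMod 2) K]
    (m : ℕ) (hm : 3 ≤ m) (hmp : m.Prime) (hK : Fintype.card K = 2 ^ m)
    (n : ℕ) (hn : n = 2 ^ m - 1)
    (h2 h1 : ℕ) (hh2 : m * h2 = 2 ^ (m - 1) - 1) (hh1 : 2 * h1 = h2 + 1)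
    (β : K) (hβ : IsPrimitiveRoot β (2 ^ m - 1))
    (δ1 δ2 : ℕ) (hδ1 : IsNthSmallestLeader n h1 δ1) (hδ2 : IsNthSmallestLeader n h2 δ2)
    (g1 g : Polynomial (ZMod 2))
    (hg1 : g1 = (Finset.Icc 1 (δ1 - 1)).lcm fun j => minpoly (ZMod 2) (β ^ j))
    (hg : g = (Finset.Icc 1 (δ2 + 1)).lcm fun j => minpoly (ZMod 2) (β ^ j)) :
    g1 ∣ g ∧
    Module.finrank (ZMod 2) (cyclicCode (ZMod 2) (2 * n) (g1 * g)) =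
      n + 2 ^ (m - 2) + (m + 1) / 2 ∧
    (n - 1) / m ≤ minDist (cyclicCode (ZMod 2) (2 * n) (g1 * g)) := by
  subst hn
  have hpow : 2 ^ m = 2 * 2 ^ (m - 1) := by
    rw [← pow_succ']; congr 1; omega
  have hpow2 : 2 ^ (m - 1) = 2 * 2 ^ (m - 2) := by
    rw [← pow_succ']; congr 1; omega
  have hp2 : 2 ≤ 2 ^ (m - 2) := by
    calc 2 = 2 ^ 1 := rfl
      _ ≤ 2 ^ (m - 2) := Nat.pow_le_pow_right (by omega) (by omega)
  set n := 2 ^ m - 1 with hn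
  have hodd1 := leader_odd hm hδ1.1
  have hodd2 := leader_odd hm hδ2.1
  have hge1 := nth_ge hm hδ1
  have hge2 := nth_ge hm hδ2
  have hlt1 := hδ1.1.2.1
  have hlt2 := hδ2.1.2.1
  have hle : δ1 ≤ δ2 := by
    by_contra hcon
    push Not at hcon
    have hsub : {a ∈ cosetLeaders n | a ≤ δ2} ⊂ {a ∈ cosetLeaders n | a ≤ δ1} := by
      have hss : {a ∈ cosetLeaders n | a ≤ δ2} ⊆ {a ∈ cosetLeaders n | a ≤ δ1} :=
        fun a ha => ⟨ha.1, ha.2.trans hcon.le⟩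
      refine (Set.ssubset_iff_of_subset hss).2 ⟨δ1, ⟨hδ1.1, le_rfl⟩, fun h => ?_⟩
      exact absurd h.2 (by omega)
    have := Set.ncard_lt_ncard hsub ((leaders_finite n).subset fun _ h => h.1)
    rw [hδ1.2, hδ2.2] at this
    omega
  have hdvd : g1 ∣ g := by
    rw [hg1, hg]
    exact Finset.lcm_mono (Finset.Icc_subset_Icc le_rfl (by omega))
  have hgn : g ∣ X ^ n - 1 := by
    rw [hg]
    apply Finset.lcm_dvd
    intro j _
    apply minpoly.dvd
    simp [← pow_mul, mul_comm j n, pow_mul β n j, hβ.pow_eq_one]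
  have hnz : (X ^ n - 1 : Polynomial (ZMod 2)) ≠ 0 :=
    (monic_X_pow_sub_C (1 : ZMod 2) (by omega)).ne_zero
  have hgne : g ≠ 0 := fun h => hnz (by rw [h, zero_dvd_iff] at hgn; exact hgn)
  have hg1ne : g1 ≠ 0 := fun h => hgne (by rw [h, zero_dvd_iff] at hdvd; exact hdvd)
  have hsq : (X ^ (2 * n) - 1 : Polynomial (ZMod 2)) = (X ^ n - 1) * (X ^ n - 1) := by
    have h2 : (2 : Polynomial (ZMod 2)) = 0 := CharTwo.two_eq_zero
    linear_combination (X ^ n - 1) * h2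
  have hGd : g1 * g ∣ X ^ (2 * n) - 1 := by
    rw [hsq]; exact mul_dvd_mul (hdvd.trans hgn) hgn
  have hdeg1 : g1.natDegree = (h1 - 1) * m := by
    rw [hg1, natDegree_lcm hmp hK hβ (by omega)]
    congr 1
    have hset : {a ∈ cosetLeaders n | a ≤ δ1 - 1} = {a ∈ cosetLeaders n | a ≤ δ1} \ {δ1} := by
      ext a
      simp only [Set.mem_sep_iff, Set.mem_sdiff, Set.mem_singleton_iff]
      have := hδ1.1.1
      constructor
      · rintro ⟨h, h'⟩; exact ⟨⟨h, by omega⟩, by omega⟩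
      · rintro ⟨⟨h, h'⟩, h''⟩; exact ⟨h, by omega⟩
    have hmem1 : δ1 ∈ {a ∈ cosetLeaders n | a ≤ δ1} := ⟨hδ1.1, le_rfl⟩
    rw [← hn, hset, Set.ncard_sdiff_singleton_of_mem hmem1, hδ1.2]
  have hdeg2 : g.natDegree = h2 * m := by
    rw [hg, natDegree_lcm hmp hK hβ (by omega)]
    congr 1
    rw [← hδ2.2]
    congr 1
    ext a
    simp only [Set.mem_sep_iff]
    constructor
    · rintro ⟨h, h'⟩
      have := leader_odd hm h
      exact ⟨h, by omega⟩
    · rintro ⟨h, h'⟩; exact ⟨h, by omega⟩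
  have hmodd : m % 2 = 1 := by
    rcases hmp.eq_two_or_odd with h | h <;> omega
  have hfr : Module.finrank (ZMod 2) (cyclicCode (ZMod 2) (2 * n) (g1 * g)) =
      n + 2 ^ (m - 2) + (m + 1) / 2 := by
    have hdG : (g1 * g).natDegree = (h1 - 1) * m + h2 * m := by
      rw [natDegree_mul hg1ne hgne, hdeg1, hdeg2]
    have e2 : h2 * m = 2 ^ (m - 1) - 1 := by rw [mul_comm]; exact hh2
    have e1 : 2 * ((h1 - 1) * m) + m = h2 * m := by
      obtain ⟨k, rfl⟩ : ∃ k, h1 = k + 1 := ⟨h1 - 1, by omega⟩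
      obtain rfl : h2 = 2 * k + 1 := by omega
      simp only [Nat.add_sub_cancel]
      ring
    rw [finrank_multiples (mul_ne_zero hg1ne hgne) (by omega) hGd, hdG]
    omega
  refine ⟨hdvd, hfr, ?_⟩
  have hbound : (n - 1) / m = 2 * h2 := by
    have : n - 1 = m * (2 * h2) := by
      have : m * (2 * h2) = 2 * (m * h2) := by ring
      omega
    rw [this, Nat.mul_div_cancel_left _ (by omega)]
  rw [hbound]
  apply le_csInf
  · have : 0 < Module.finrank (ZMod 2) (cyclicCode (ZMod 2) (2 * n) (g1 * g)) := by omega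
    have := Module.nontrivial_of_finrank_pos this
    obtain ⟨c, hc⟩ := exists_ne (0 : cyclicCode (ZMod 2) (2 * n) (g1 * g))
    exact ⟨_, c, c.2, fun h => hc (Subtype.ext h), rfl⟩
  · rintro w ⟨c, hc, hc0, rfl⟩
    obtain ⟨hcd, hcG⟩ := hc
    rw [SetLike.mem_coe, mem_degreeLT] at hcd
    have hcG' : g1 * g ∣ c := by
      have : Ideal.span ({g1 * g, X ^ (2 * n) - 1} : Set (Polynomial (ZMod 2))) ≤
          Ideal.span {g1 * g} := by
        rw [Ideal.span_insert]
        exact sup_le le_rfl (Ideal.span_singleton_le_span_singleton.2 hGd)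
      exact Ideal.mem_span_singleton.1 (this hcG)
    have hXm : (X ^ n : Polynomial (ZMod 2)).Monic := monic_X_pow n
    set a := c %ₘ X ^ n with ha
    set b := c /ₘ X ^ n with hb
    have hab : a + X ^ n * b = c := modByMonic_add_div c (X ^ n)
    have had : a.degree < n := by
      have := degree_modByMonic_lt c hXm
      rwa [degree_X_pow] at this
    have hbd : b.degree < n := by
      rcases eq_or_ne b 0 with h0 | h0
      · rw [h0, degree_zero]; exact WithBot.bot_lt_coe _
      · have hcn : c.natDegree < 2 * n := (natDegree_lt_iff_degree_lt hc0).2 hcd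
        have := natDegree_divByMonic c hXm
        rw [natDegree_X_pow, ← hb] at this
        rw [← natDegree_lt_iff_degree_lt h0]
        omega
    have hwt := support_fold (b := b) had
    rw [hab] at hwt
    by_cases hr : a + b = 0
    · have hba : a = b := by
        rwa [CharTwo.add_eq_zero] at hr
      have hceq : c = (X ^ n - 1) * b := by
        have h2 : (2 : Polynomial (ZMod 2)) = 0 := CharTwo.two_eq_zero
        rw [← hab, hba]
        linear_combination b * h2
      have hb0 : b ≠ 0 := by rintro h; rw [h, mul_zero] at hceq; exact hc0 hceq
      have hg1b : g1 ∣ b := by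
        obtain ⟨h, hh⟩ := hgn
        have hsep : (X ^ n - 1 : Polynomial (ZMod 2)).Separable := by
          rw [X_pow_sub_one_separable_iff]
          intro h0
          rw [ZMod.natCast_eq_zero_iff] at h0
          omega
        rw [hh] at hsep
        have hcop : IsCoprime g1 h := hsep.isCoprime.of_isCoprime_of_dvd_left hdvd
        rw [hceq, hh, mul_comm g1 g, mul_assoc] at hcG'
        exact hcop.dvd_of_dvd_mul_left ((mul_dvd_mul_iff_left hgne).1 hcG')
      rw [hg1] at hg1b
      have := bch_bound hβ hb0 hbd hg1b
      rw [hwt, hba]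
      omega
    · have hgr : g ∣ a + b := by
        have : a + b = c - (X ^ n - 1) * b := by rw [← hab]; ring
        rw [this]
        exact dvd_sub ((dvd_mul_left g g1).trans hcG') (hgn.mul_right b)
      rw [hg] at hgr
      have h3 := bch_bound hβ hr ((degree_add_le a b).trans_lt (max_lt had hbd)) hgr
      have h4 : (a + b).support.card ≤ a.support.card + b.support.card :=
        (Finset.card_le_card support_add).trans (Finset.card_union_le _ _)
      omega
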